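/- Let G_0 be an acyclic graph on [n+1] with d edges, let (i,j), (j,k) ∈ E(G_0) with i < j < k, and let G_1, G_2, G_3 be the graphs produced by the reduction of G_0 at this pair. Then G_1, G_2, G_3 are acyclic; P(G_0) = P(G_1) ∪ P(G_2), where P(G_0), P(G_1), P(G_2) are all d-dimensional polytopes; and P(G_3) = P(G_1) ∩ P(G_2) is a (d−1)-dimensional polytope. -/

import Mathlib

open scoped BigOperators

namespace RPaper

abbrev Vtype (n : ℕ) := Fin (n+1) → ℝ

abbrev Edge (n : ℕ) := Fin (n+1) × Fin (n+1)

abbrev EdgeSet (n : ℕ) := Finset (Edge n)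

/-- The vector `e_i - e_j`. -/
def ev {n : ℕ} (i j : Fin (n+1)) : Vtype n := Pi.single i 1 - Pi.single j 1

/-- Edges are stored as pairs `(i,j)` with `i < j`. -/
def IsGraph {n : ℕ} (E : EdgeSet n) : Prop := ∀ e ∈ E, e.1 < e.2

/-- The simple graph underlying an edge set. -/
def toSG {n : ℕ} (E : EdgeSet n) : SimpleGraph (Fin (n+1)) :=
  SimpleGraph.fromRel (fun a b => (a, b) ∈ E)

def Acyclic {n : ℕ} (E : EdgeSet n) : Prop := (toSG E).IsAcyclic

def IsForest {n : ℕ} (E : EdgeSet n) : Prop := IsGraph E ∧ Acyclic E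

/-- A tree on the full vertex set `[n+1]`: connected and acyclic. -/
def IsTreeG {n : ℕ} (E : EdgeSet n) : Prop := IsGraph E ∧ (toSG E).IsTree

def Noncrossing {n : ℕ} (E : EdgeSet n) : Prop :=
  ¬ ∃ i j k l : Fin (n+1), i < j ∧ j < k ∧ k < l ∧ (i, k) ∈ E ∧ (j, l) ∈ E

def Alternating {n : ℕ} (E : EdgeSet n) : Prop :=
  ¬ ∃ i j k : Fin (n+1), i < j ∧ j < k ∧ (i, j) ∈ E ∧ (j, k) ∈ E

/-- The positive roots `e_i - e_j`, `i < j`. -/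
def PhiPlus (n : ℕ) : Set (Vtype n) := {v | ∃ i j : Fin (n+1), i < j ∧ v = ev i j}

/-- The cone of nonnegative combinations of the vectors of `E`. -/
def cone {n : ℕ} (E : EdgeSet n) : Set (Vtype n) :=
  {x | ∃ c : Edge n → ℝ, (∀ e, 0 ≤ c e) ∧ x = ∑ e ∈ E, c e • ev e.1 e.2}

def Vbar {n : ℕ} (E : EdgeSet n) : Set (Vtype n) := PhiPlus n ∩ cone E

/-- The root polytope of a graph. -/
def RootPoly {n : ℕ} (E : EdgeSet n) : Set (Vtype n) := convexHull ℝ ({0} ∪ Vbar E)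

/-- The full root polytope `P(A_n^+)`. -/
def FullRootPoly (n : ℕ) : Set (Vtype n) := convexHull ℝ ({0} ∪ PhiPlus n)

/-- Transitive closure: `(i,j)`, `i<j`, whenever there is an increasing path in `E`. -/
def closureT {n : ℕ} (E : EdgeSet n) : Set (Edge n) :=
  {p | p.1 < p.2 ∧ Relation.TransGen (fun a b => a < b ∧ (a, b) ∈ E) p.1 p.2}

/-- Noncrossing alternating spanning trees of the transitive closure of `E`. -/
def NCASpanningTrees {n : ℕ} (E : EdgeSet n) : Set (EdgeSet n) :=
  {F | IsTreeG F ∧ Noncrossing F ∧ Alternating F ∧ ↑F ⊆ closureT E}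

/-- The `t`-th dilate of a set. -/
def dilate {n : ℕ} (t : ℕ) (P : Set (Vtype n)) : Set (Vtype n) := (fun x => (t : ℝ) • x) '' P

/-- Number of lattice points of the `t`-th dilate. -/
noncomputable def latticeCount {n : ℕ} (P : Set (Vtype n)) (t : ℕ) : ℕ :=
  Set.ncard {x ∈ dilate t P | ∀ i, ∃ z : ℤ, x i = (z : ℝ)}

/-- Dimension of the affine span of a set. -/
noncomputable def polyDim {n : ℕ} (P : Set (Vtype n)) : ℕ :=
  Module.finrank ℝ (affineSpan ℝ P).direction

/-- The points `0` and `e_i - e_j`, `(i,j) ∈ F`. -/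
def vertSet {n : ℕ} (F : EdgeSet n) : Set (Vtype n) :=
  {0} ∪ {v | ∃ e ∈ F, v = ev e.1 e.2}

/-- A playable route: an increasing vertex sequence whose consecutive pairs are edges. -/
structure PlayableRoute {n : ℕ} (E : EdgeSet n) where
  len : ℕ
  route : Fin (len + 2) → Fin (n+1)
  mono : StrictMono route
  mem : ∀ t : Fin (len + 1), (route t.castSucc, route t.succ) ∈ E

/-- A set is a simplex if it is the convex hull of a finite affinely independent set. -/
def IsSimplex {n : ℕ} (P : Set (Vtype n)) : Prop :=
  ∃ s : Finset (Vtype n),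
    AffineIndependent ℝ (fun x : (s : Set (Vtype n)) => x.1) ∧ P = convexHull ℝ ↑s

/-- The three graphs produced by a reduction at `(i,j), (j,k)`. -/
def red1 {n : ℕ} (E : EdgeSet n) (i j k : Fin (n+1)) : EdgeSet n :=
  insert (i, k) (E.erase (j, k))

def red2 {n : ℕ} (E : EdgeSet n) (i j k : Fin (n+1)) : EdgeSet n :=
  insert (i, k) (E.erase (i, j))

def red3 {n : ℕ} (E : EdgeSet n) (i j k : Fin (n+1)) : EdgeSet n :=
  insert (i, k) ((E.erase (i, j)).erase (j, k))

lemma cone_zero {n : ℕ} (E : EdgeSet n) : (0 : Vtype n) ∈ cone E :=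
  ⟨fun _ => 0, fun _ => le_rfl, by simp⟩

lemma cone_add {n : ℕ} {E : EdgeSet n} {x y : Vtype n} (hx : x ∈ cone E) (hy : y ∈ cone E) :
    x + y ∈ cone E := by
  obtain ⟨c, hc, rfl⟩ := hx
  obtain ⟨c', hc', rfl⟩ := hy
  exact ⟨fun e => c e + c' e, fun e => add_nonneg (hc e) (hc' e), by
    simp [add_smul, Finset.sum_add_distrib]⟩

lemma cone_smul {n : ℕ} {E : EdgeSet n} {x : Vtype n} {t : ℝ} (ht : 0 ≤ t) (hx : x ∈ cone E) :
    t • x ∈ cone E := by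
  obtain ⟨c, hc, rfl⟩ := hx
  exact ⟨fun e => t * c e, fun e => mul_nonneg ht (hc e), by
    simp [mul_smul, Finset.smul_sum]⟩

lemma cone_mem {n : ℕ} {E : EdgeSet n} {e : Edge n} (he : e ∈ E) : ev e.1 e.2 ∈ cone E := by
  classical
  refine ⟨fun f => if f = e then 1 else 0, fun f => by dsimp only; split_ifs <;> norm_num, ?_⟩
  simp [he]

lemma cone_sum {n : ℕ} {E : EdgeSet n} {ι : Type*} (s : Finset ι) (f : ι → Vtype n)
    (h : ∀ a ∈ s, f a ∈ cone E) : ∑ a ∈ s, f a ∈ cone E := by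
  classical
  induction s using Finset.induction_on with
  | empty => simpa using cone_zero E
  | insert a s ha ih =>
    rw [Finset.sum_insert ha]
    exact cone_add (h a (by simp)) (ih fun b hb => h b (by simp [hb]))

lemma cone_le {n : ℕ} {E F : EdgeSet n} (h : ∀ e ∈ F, ev e.1 e.2 ∈ cone E) :
    cone F ⊆ cone E := by
  rintro x ⟨c, hc, rfl⟩
  exact cone_sum _ _ fun e he => cone_smul (hc e) (h e he)

lemma cone_mono {n : ℕ} {E F : EdgeSet n} (h : F ⊆ E) : cone F ⊆ cone E :=
  cone_le fun _ he => cone_mem (h he)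

lemma cone_insert {n : ℕ} {E : EdgeSet n} {e : Edge n} {x : Vtype n}
    (hx : x ∈ cone (insert e E)) :
    ∃ a : ℝ, 0 ≤ a ∧ ∃ y ∈ cone E, x = a • ev e.1 e.2 + y := by
  classical
  by_cases he : e ∈ E
  · rw [Finset.insert_eq_of_mem he] at hx
    exact ⟨0, le_rfl, x, hx, by simp⟩
  · obtain ⟨c, hc, rfl⟩ := hx
    exact ⟨c e, hc e, _, ⟨c, hc, rfl⟩, by rw [Finset.sum_insert he]⟩

lemma ev_add {n : ℕ} (i j k : Fin (n+1)) : ev i j + ev j k = ev i k := by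
  simp [ev]

/-- the l1 norm -/
def l1 {n : ℕ} (x : Vtype n) : ℝ := ∑ i, |x i|

lemma l1_ev {n : ℕ} (i j : Fin (n+1)) : l1 (ev i j) ≤ 2 := by
  calc l1 (ev i j) ≤ ∑ t, (|(Pi.single i 1 : Vtype n) t| + |(Pi.single j 1 : Vtype n) t|) := by
        unfold l1 ev
        exact Finset.sum_le_sum fun t _ => abs_sub _ _
    _ = 2 := by
        rw [Finset.sum_add_distrib]
        have : ∀ i : Fin (n+1), ∑ t, |(Pi.single i 1 : Vtype n) t| = 1 := by
          intro i
          rw [Finset.sum_eq_single i] <;> simp +contextual [Pi.single_apply]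
        rw [this, this]; norm_num

lemma exists_decomp {n : ℕ} (E : EdgeSet n) (hE : IsGraph E) (x : Vtype n) (hx : x ∈ cone E) :
    ∃ c : Edge n → ℝ, (∀ e, 0 ≤ c e) ∧ (∀ e, c e ≠ 0 → ev e.1 e.2 ∈ Vbar E) ∧
      x = ∑ e, c e • ev e.1 e.2 ∧ 2 * ∑ e, c e = l1 x := by
  classical
  obtain ⟨c0, hc0, hx0⟩ := hx
  let c1 : Edge n → ℝ := fun e => if e ∈ E then c0 e else 0
  have hc1 : ∀ e, 0 ≤ c1 e := fun e => by simp only [c1]; split_ifs; exacts [hc0 e, le_rfl]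
  have hx1 : x = ∑ e, c1 e • ev e.1 e.2 := by
    rw [hx0]; simp [c1, ite_smul]
  let A : Edge n → Prop := fun e => e.1 < e.2 ∧ ev e.1 e.2 ∈ cone E
  have hA1 : ∀ e, ¬ A e → c1 e = 0 := by
    intro e he
    by_contra h
    have : e ∈ E := by
      by_contra h'
      exact h (by simp [c1, h'])
    exact he ⟨hE e this, cone_mem this⟩
  let K : Set (Edge n → ℝ) := {c | (∀ e, 0 ≤ c e) ∧ (∀ e, ¬ A e → c e = 0) ∧
    x = ∑ e, c e • ev e.1 e.2 ∧ ∑ e, c e ≤ ∑ e, c1 e}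
  have hKne : K.Nonempty := ⟨c1, hc1, hA1, hx1, le_rfl⟩
  have hKcl : IsClosed K := by
    have e1 : IsClosed {c : Edge n → ℝ | ∀ e, 0 ≤ c e} := by
      simp only [Set.setOf_forall]
      exact isClosed_iInter fun e => isClosed_le continuous_const (continuous_apply e)
    have e2 : IsClosed {c : Edge n → ℝ | ∀ e, ¬ A e → c e = 0} := by
      simp only [Set.setOf_forall]
      exact isClosed_iInter fun e => isClosed_iInter fun _ =>
        isClosed_eq (continuous_apply e) continuous_const
    have e3 : IsClosed {c : Edge n → ℝ | x = ∑ e, c e • ev e.1 e.2} :=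
      isClosed_eq continuous_const (by fun_prop)
    have e4 : IsClosed {c : Edge n → ℝ | ∑ e, c e ≤ ∑ e, c1 e} :=
      isClosed_le (by fun_prop) continuous_const
    exact e1.inter (e2.inter (e3.inter e4))
  have hKc : IsCompact K := by
    refine (isCompact_Icc (a := (0 : Edge n → ℝ)) (b := fun _ => ∑ e, c1 e)).of_isClosed_subset
      hKcl ?_
    rintro c ⟨h1, -, -, h4⟩
    refine ⟨h1, fun e => le_trans ?_ h4⟩
    exact Finset.single_le_sum (fun e _ => h1 e) (Finset.mem_univ e)
  obtain ⟨c, ⟨hc, hA, hxc, hle⟩, hmin⟩ := hKc.exists_isMinOn hKne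
    (f := fun c : Edge n → ℝ => ∑ e, c e) (by fun_prop)
  have key : ∀ a j b, ¬ (0 < c (a, j) ∧ 0 < c (j, b)) := by
    rintro a j b ⟨h1, h2⟩
    have A1 : A (a, j) := by
      by_contra h; rw [hA _ h] at h1; exact lt_irrefl _ h1
    have A2 : A (j, b) := by
      by_contra h; rw [hA _ h] at h2; exact lt_irrefl _ h2
    obtain ⟨l1', m1⟩ := A1
    obtain ⟨l2, m2⟩ := A2
    simp only at l1' l2 m1 m2
    have A3 : A (a, b) := ⟨l1'.trans l2, by
      have := cone_add m1 m2
      rwa [ev_add] at this⟩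
    set t := min (c (a, j)) (c (j, b)) with ht
    have tpos : 0 < t := lt_min h1 h2
    let c' : Edge n → ℝ := fun e => c e + (if e = (a, b) then t else 0)
      - (if e = (a, j) then t else 0) - (if e = (j, b) then t else 0)
    have hsum : ∑ e, c' e = ∑ e, c e - t := by
      simp [c', Finset.sum_add_distrib, Finset.sum_sub_distrib]
    have hc'K : c' ∈ K := by
      refine ⟨?_, ?_, ?_, ?_⟩
      · intro e
        have ne : (a, j) ≠ (j, b) := by
          intro h; rw [Prod.mk.injEq] at h; exact l1'.ne h.1
        have := hc e
        have t1 : t ≤ c (a, j) := min_le_left _ _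
        have t2 : t ≤ c (j, b) := min_le_right _ _
        simp only [c']
        by_cases q1 : e = (a, j)
        · subst q1; simp only [if_true, if_neg ne]; split_ifs <;> linarith
        · by_cases q2 : e = (j, b)
          · subst q2; simp only [if_true, if_neg q1]; split_ifs <;> linarith
          · simp only [if_neg q1, if_neg q2]; split_ifs <;> linarith
      · intro e he
        have q1 : e ≠ (a, j) := by rintro rfl; exact he ⟨l1', m1⟩
        have q2 : e ≠ (j, b) := by rintro rfl; exact he ⟨l2, m2⟩
        have q3 : e ≠ (a, b) := by rintro rfl; exact he A3
        simp [c', q1, q2, q3, hA e he]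
      · have : ∑ e, c' e • ev e.1 e.2 = ∑ e, c e • ev e.1 e.2 + t • ev a b - t • ev a j
            - t • ev j b := by
          simp [c', add_smul, sub_smul, ite_smul, Finset.sum_add_distrib, Finset.sum_sub_distrib]
        rw [this, ← hxc, ← ev_add a j b, smul_add]
        abel
      · rw [hsum]; linarith
    have := hmin hc'K
    simp only [Set.mem_setOf_eq] at this
    rw [hsum] at this
    linarith
  refine ⟨c, hc, ?_, hxc, ?_⟩
  · intro e he
    have : A e := by
      by_contra h; exact he (hA e h)
    exact ⟨⟨e.1, e.2, this.1, rfl⟩, this.2⟩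
  · have hcoord : ∀ v, x v = ∑ b, c (v, b) - ∑ a, c (a, v) := by
      intro v
      rw [hxc, Finset.sum_apply]
      simp only [Pi.smul_apply, ev, Pi.sub_apply, smul_eq_mul, mul_sub, Finset.sum_sub_distrib]
      congr 1
      · rw [Fintype.sum_prod_type, Finset.sum_eq_single v]
        · simp
        · intro b _ hb; simp [Pi.single_apply, hb.symm]
        · simp
      · rw [Fintype.sum_prod_type_right, Finset.sum_eq_single v]
        · simp
        · intro b _ hb; simp [Pi.single_apply, hb.symm]
        · simp
    have habs : ∀ v, |x v| = ∑ b, c (v, b) + ∑ a, c (a, v) := by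
      intro v
      rw [hcoord]
      by_cases h : ∃ a, 0 < c (a, v)
      · obtain ⟨a, ha⟩ := h
        have : ∑ b, c (v, b) = 0 := Finset.sum_eq_zero fun b _ =>
          le_antisymm (not_lt.1 fun h => key a v b ⟨ha, h⟩) (hc _)
        rw [this, zero_sub, abs_neg, zero_add, abs_of_nonneg (Finset.sum_nonneg fun _ _ => hc _)]
      · push Not at h
        have : ∑ a, c (a, v) = 0 := Finset.sum_eq_zero fun a _ => le_antisymm (h a) (hc _)
        rw [this, sub_zero, add_zero, abs_of_nonneg (Finset.sum_nonneg fun _ _ => hc _)]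
    unfold l1
    simp only [habs, Finset.sum_add_distrib]
    rw [← Fintype.sum_prod_type (f := fun e : Edge n => c e),
      ← Fintype.sum_prod_type_right (f := fun e : Edge n => c e)]
    ring

lemma rootPoly_eq {n : ℕ} (E : EdgeSet n) (hE : IsGraph E) :
    RootPoly E = cone E ∩ {x | l1 x ≤ 2} := by
  apply Set.Subset.antisymm
  · refine convexHull_min ?_ ?_
    · rintro x (rfl | hx)
      · exact ⟨cone_zero E, by simp [l1]⟩
      · obtain ⟨⟨a, b, -, rfl⟩, h⟩ := hx
        exact ⟨h, l1_ev a b⟩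
    · intro x hx y hy a b ha hb hab
      refine ⟨cone_add (cone_smul ha hx.1) (cone_smul hb hy.1), ?_⟩
      have h1 : l1 x ≤ 2 := hx.2
      have h2 : l1 y ≤ 2 := hy.2
      have : l1 (a • x + b • y) ≤ a * l1 x + b * l1 y := by
        unfold l1
        rw [Finset.mul_sum, Finset.mul_sum, ← Finset.sum_add_distrib]
        refine Finset.sum_le_sum fun i _ => ?_
        simp only [Pi.add_apply, Pi.smul_apply, smul_eq_mul]
        refine (abs_add_le _ _).trans ?_
        rw [abs_mul, abs_mul, abs_of_nonneg ha, abs_of_nonneg hb]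
      show l1 _ ≤ 2
      nlinarith
  · rintro x ⟨hx, hl⟩
    obtain ⟨c, hc, hV, hxc, hs⟩ := exists_decomp E hE x hx
    have hl' : l1 x ≤ 2 := hl
    have hs1 : ∑ e, c e ≤ 1 := by linarith
    have hconv : Convex ℝ (RootPoly E) := convex_convexHull ℝ _
    have h0 : (0 : Vtype n) ∈ RootPoly E := subset_convexHull ℝ _ (by simp)
    let z : Edge n → Vtype n := fun e => if c e = 0 then 0 else ev e.1 e.2
    have hz : ∀ e, z e ∈ RootPoly E := by
      intro e
      simp only [z]
      split_ifs with h
      · exact h0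
      · exact subset_convexHull ℝ _ (Or.inr (hV e h))
    have hxz : x = ∑ e, c e • z e := by
      rw [hxc]
      refine Finset.sum_congr rfl fun e _ => ?_
      simp only [z]
      split_ifs with h
      · simp [h]
      · rfl
    have := hconv.sum_mem (t := (Finset.univ : Finset (Option (Edge n))))
      (w := fun o => o.elim (1 - ∑ e, c e) c) (z := fun o => o.elim 0 z) ?_ ?_ ?_
    · rw [hxz]; simpa using this
    · rintro (_ | e) _
      · simpa using hs1
      · exact hc e
    · simp
    · rintro (_ | e) _
      · exact h0
      · exact hz e

/-- edge vector -/
def evE {n : ℕ} (e : Edge n) : Vtype n := ev e.1 e.2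

lemma polyDim_eq {n : ℕ} (E : EdgeSet n) (hE : IsGraph E)
    (hLI : LinearIndepOn ℝ (evE (n := n)) (E : Set (Edge n))) :
    polyDim (RootPoly E) = E.card := by
  have h0 : (0 : Vtype n) ∈ ({0} ∪ Vbar E : Set (Vtype n)) := by simp
  have hs : (affineSpan ℝ (RootPoly E)).direction = Submodule.span ℝ (evE '' (E : Set (Edge n))) := by
    unfold RootPoly
    rw [affineSpan_convexHull, direction_affineSpan,
      vectorSpan_eq_span_vsub_set_right ℝ h0]
    apply le_antisymm
    · rw [Submodule.span_le]
      rintro _ ⟨x, hx, rfl⟩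
      simp only [vsub_eq_sub, sub_zero]
      rcases hx with rfl | ⟨-, c, -, rfl⟩
      · exact Submodule.zero_mem _
      · exact Submodule.sum_mem _ fun e he => Submodule.smul_mem _ _
          (Submodule.subset_span ⟨e, he, rfl⟩)
    · refine Submodule.span_mono ?_
      rintro _ ⟨e, he, rfl⟩
      exact ⟨ev e.1 e.2, Or.inr ⟨⟨e.1, e.2, hE e he, rfl⟩, cone_mem he⟩, by simp [evE]⟩
  unfold polyDim
  rw [hs]
  have := finrank_span_eq_card (R := ℝ) (b := fun e : (E : Set (Edge n)) => evE (n := n) e) hLI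
  rw [← Set.image_eq_range] at this
  rw [this]
  simp

lemma toSG_adj {n : ℕ} {E : EdgeSet n} {a b : Fin (n+1)} :
    (toSG E).Adj a b ↔ a ≠ b ∧ ((a, b) ∈ E ∨ (b, a) ∈ E) := by
  simp [toSG]

lemma LI_of_acyclic {n : ℕ} (E : EdgeSet n) (hE : IsGraph E) (h : Acyclic E) :
    LinearIndepOn ℝ (evE (n := n)) (E : Set (Edge n)) := by
  classical
  rw [linearIndepOn_iff_notMem_span]
  rintro ⟨a, b⟩ he hmem
  have hlt : a < b := hE _ he
  have hb := SimpleGraph.isAcyclic_iff_forall_adj_isBridge.1 h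
    (toSG_adj.2 ⟨hlt.ne, Or.inl he⟩)
  rw [SimpleGraph.isBridge_iff] at hb
  set H := (toSG E).deleteEdges {s(a, b)} with hH
  let φ : Vtype n →ₗ[ℝ] ℝ := ∑ v, (if H.Reachable a v then (1:ℝ) else 0) • LinearMap.proj v
  have hφ : ∀ p q, φ (ev p q) = (if H.Reachable a p then (1:ℝ) else 0)
      - (if H.Reachable a q then (1:ℝ) else 0) := by
    intro p q
    simp only [φ, ev, LinearMap.sum_apply, LinearMap.smul_apply, LinearMap.proj_apply,
      Pi.sub_apply, Pi.single_apply, smul_eq_mul, mul_sub, Finset.sum_sub_distrib, mul_ite,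
      mul_one, mul_zero, Finset.sum_ite_eq', Finset.sum_ite_eq, Finset.mem_univ, if_true]
  have hker : Submodule.span ℝ (evE '' ((E : Set (Edge n)) \ {(a, b)})) ≤ LinearMap.ker φ := by
    rw [Submodule.span_le]
    rintro _ ⟨⟨p, q⟩, ⟨hpq, hne⟩, rfl⟩
    have hlt' : p < q := hE _ hpq
    have hadj : H.Adj p q := by
      rw [hH, SimpleGraph.deleteEdges_adj]
      refine ⟨toSG_adj.2 ⟨hlt'.ne, Or.inl hpq⟩, ?_⟩
      intro hs
      rw [Set.mem_singleton_iff, Sym2.eq_iff] at hs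
      rcases hs with ⟨rfl, rfl⟩ | ⟨rfl, rfl⟩
      · exact hne rfl
      · exact lt_asymm hlt hlt'
    have hiff : H.Reachable a p ↔ H.Reachable a q :=
      ⟨fun h => h.trans hadj.reachable, fun h => h.trans hadj.symm.reachable⟩
    show φ (ev p q) = 0
    rw [hφ]; simp [hiff]
  have h0 : φ (ev a b) = 0 := hker hmem
  rw [hφ, if_pos (SimpleGraph.Reachable.refl _), if_neg hb] at h0
  norm_num at h0

lemma acyclic_of_LI {n : ℕ} (E : EdgeSet n)
    (h : LinearIndepOn ℝ (evE (n := n)) (E : Set (Edge n))) : Acyclic E := by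
  classical
  rw [linearIndepOn_iff_notMem_span] at h
  unfold Acyclic
  rw [SimpleGraph.isAcyclic_iff_forall_adj_isBridge]
  have key : ∀ a b, (a, b) ∈ E → (toSG E).IsBridge s(a, b) := by
    intro a b hab
    rw [SimpleGraph.isBridge_iff]
    intro hr
    apply h _ hab
    set S := Submodule.span ℝ (evE '' ((E : Set (Edge n)) \ {(a, b)})) with hS
    obtain ⟨w⟩ := hr
    have : ∀ u v, ∀ w : ((toSG E).deleteEdges {s(a, b)}).Walk u v, ev u v ∈ S := by
      intro u v w
      induction w with
      | nil => simp [ev]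
      | @cons u v t hadj _ ih =>
        rw [← ev_add u v t]
        refine S.add_mem ?_ ih
        rw [SimpleGraph.deleteEdges_adj] at hadj
        obtain ⟨h1, h2⟩ := hadj
        rcases (toSG_adj.1 h1).2 with h3 | h3
        · refine Submodule.subset_span ⟨(u, v), ⟨h3, ?_⟩, rfl⟩
          intro h4
          rw [Set.mem_singleton_iff, Prod.mk.injEq] at h4
          exact h2 (by rw [h4.1, h4.2]; rfl)
        · have : ev u v = - ev v u := by simp [ev]
          rw [this]
          refine S.neg_mem (Submodule.subset_span ⟨(v, u), ⟨h3, ?_⟩, rfl⟩)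
          intro h4
          rw [Set.mem_singleton_iff, Prod.mk.injEq] at h4
          exact h2 (by rw [h4.1, h4.2, Sym2.eq_swap]; rfl)
    exact this a b w
  intro a b hab
  rcases (toSG_adj.1 hab).2 with h1 | h1
  · exact key a b h1
  · rw [Sym2.eq_swap]; exact key b a h1

/- STATEMENT 6 -/
theorem stmt6 {n : ℕ} (hn : 1 ≤ n) (E : EdgeSet n) (hE : IsGraph E) (hac : Acyclic E)
    (d : ℕ) (hd : E.card = d) (i j k : Fin (n+1)) (hij : i < j) (hjk : j < k)
    (h1 : (i, j) ∈ E) (h2 : (j, k) ∈ E) :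
    (Acyclic (red1 E i j k) ∧ Acyclic (red2 E i j k) ∧ Acyclic (red3 E i j k)) ∧
    RootPoly E = RootPoly (red1 E i j k) ∪ RootPoly (red2 E i j k) ∧
    (polyDim (RootPoly E) = d ∧ polyDim (RootPoly (red1 E i j k)) = d ∧
      polyDim (RootPoly (red2 E i j k)) = d) ∧
    RootPoly (red3 E i j k) = RootPoly (red1 E i j k) ∩ RootPoly (red2 E i j k) ∧
    polyDim (RootPoly (red3 E i j k)) = d - 1 := by
  classical
  have hLI := LI_of_acyclic E hE hac
  have hns := linearIndepOn_iff_notMem_span.1 hLI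
  have hne : (i, j) ≠ (j, k) := by
    intro h; rw [Prod.mk.injEq] at h; exact hij.ne h.1
  have hevE : evE (i, j) + evE (j, k) = evE (i, k) := ev_add i j k
  have n1 : evE (i, k) ∉ Submodule.span ℝ (evE '' (↑(E.erase (j, k)) : Set (Edge n))) := by
    intro h
    apply hns _ h2
    rw [Finset.coe_erase] at h
    rw [← add_sub_cancel_left (evE (i, j)) (evE (j, k)), hevE]
    exact Submodule.sub_mem _ h (Submodule.subset_span ⟨_, ⟨h1, hne⟩, rfl⟩)
  have n2 : evE (i, k) ∉ Submodule.span ℝ (evE '' (↑(E.erase (i, j)) : Set (Edge n))) := by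
    intro h
    apply hns _ h1
    rw [Finset.coe_erase] at h
    rw [← add_sub_cancel_right (evE (i, j)) (evE (j, k)), hevE]
    exact Submodule.sub_mem _ h (Submodule.subset_span ⟨_, ⟨h2, hne.symm⟩, rfl⟩)
  have m1 : (i, k) ∉ E.erase (j, k) := fun h => n1 (Submodule.subset_span ⟨_, h, rfl⟩)
  have m2 : (i, k) ∉ E.erase (i, j) := fun h => n2 (Submodule.subset_span ⟨_, h, rfl⟩)
  have m3 : (i, k) ∉ (E.erase (i, j)).erase (j, k) := fun h => m2 (Finset.mem_of_mem_erase h)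
  have h2' : (j, k) ∈ E.erase (i, j) := Finset.mem_erase.2 ⟨hne.symm, h2⟩
  have L1 : LinearIndepOn ℝ (evE (n := n)) (red1 E i j k : Set (Edge n)) := by
    unfold red1
    rw [Finset.coe_insert]
    exact (hLI.mono (by simp)).insert n1
  have L2 : LinearIndepOn ℝ (evE (n := n)) (red2 E i j k : Set (Edge n)) := by
    unfold red2
    rw [Finset.coe_insert]
    exact (hLI.mono (by simp)).insert n2
  have s32 : red3 E i j k ⊆ red2 E i j k :=
    Finset.insert_subset_insert _ (Finset.erase_subset _ _)
  have s31 : red3 E i j k ⊆ red1 E i j k := by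
    refine Finset.insert_subset_insert _ ?_
    rw [Finset.erase_right_comm]
    exact Finset.erase_subset _ _
  have L3 : LinearIndepOn ℝ (evE (n := n)) (red3 E i j k : Set (Edge n)) :=
    L2.mono (by exact_mod_cast s32)
  have G1 : IsGraph (red1 E i j k) := by
    intro e he
    rcases Finset.mem_insert.1 he with rfl | he
    · exact hij.trans hjk
    · exact hE e (Finset.mem_of_mem_erase he)
  have G2 : IsGraph (red2 E i j k) := by
    intro e he
    rcases Finset.mem_insert.1 he with rfl | he
    · exact hij.trans hjk
    · exact hE e (Finset.mem_of_mem_erase he)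
  have G3 : IsGraph (red3 E i j k) := fun e he => G1 e (s31 he)
  have c2 : 0 < (E.erase (i, j)).card := Finset.card_pos.2 ⟨_, h2'⟩
  have cE := Finset.card_erase_add_one h1
  have cE2 := Finset.card_erase_add_one h2
  have cE' := Finset.card_erase_add_one h2'
  have C1 : (red1 E i j k).card = d := by
    unfold red1; rw [Finset.card_insert_of_notMem m1]; omega
  have C2 : (red2 E i j k).card = d := by
    unfold red2; rw [Finset.card_insert_of_notMem m2]; omega
  have C3 : (red3 E i j k).card = d - 1 := by
    unfold red3; rw [Finset.card_insert_of_notMem m3]; omega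
  -- cones
  set R := (E.erase (i, j)).erase (j, k) with hR
  have EE : E = insert (i, j) (insert (j, k) R) := by
    rw [hR, Finset.insert_erase h2', Finset.insert_erase h1]
  have E1 : red1 E i j k = insert (i, k) (insert (i, j) R) := by
    unfold red1
    rw [hR, Finset.erase_right_comm, Finset.insert_erase (Finset.mem_erase.2 ⟨hne, h1⟩)]
  have E2 : red2 E i j k = insert (i, k) (insert (j, k) R) := by
    unfold red2
    rw [hR, Finset.insert_erase h2']
  have E3 : red3 E i j k = insert (i, k) R := rfl
  have hik : ev i k ∈ cone E := by
    rw [← ev_add i j k]; exact cone_add (cone_mem h1) (cone_mem h2)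
  have K1 : cone (red1 E i j k) ⊆ cone E := by
    refine cone_le fun e he => ?_
    rcases Finset.mem_insert.1 he with rfl | he
    · exact hik
    · exact cone_mem (Finset.mem_of_mem_erase he)
  have K2 : cone (red2 E i j k) ⊆ cone E := by
    refine cone_le fun e he => ?_
    rcases Finset.mem_insert.1 he with rfl | he
    · exact hik
    · exact cone_mem (Finset.mem_of_mem_erase he)
  have R1 : R ⊆ red1 E i j k := by
    rw [E1]; intro e he; simp [he]
  have R2 : R ⊆ red2 E i j k := by
    rw [E2]; intro e he; simp [he]
  have R3 : R ⊆ red3 E i j k := by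
    rw [E3]; intro e he; simp [he]
  have KU : cone E ⊆ cone (red1 E i j k) ∪ cone (red2 E i j k) := by
    intro x hx
    rw [EE] at hx
    obtain ⟨a, ha, y, hy, rfl⟩ := cone_insert hx
    obtain ⟨b, hb, z, hz, rfl⟩ := cone_insert hy
    simp only
    rcases le_total b a with hab | hab
    · left
      have : a • ev i j + (b • ev j k + z) = (a - b) • ev i j + (b • ev i k + z) := by
        rw [← ev_add i j k, sub_smul, smul_add]; abel
      rw [this]
      refine cone_add (cone_smul (by linarith) (cone_mem (e := (i, j)) ?_))
        (cone_add (cone_smul hb (cone_mem (e := (i, k)) ?_)) (cone_mono R1 hz)) <;>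
      rw [E1] <;> simp
    · right
      have : a • ev i j + (b • ev j k + z) = (b - a) • ev j k + (a • ev i k + z) := by
        rw [← ev_add i j k, sub_smul, smul_add]; abel
      rw [this]
      refine cone_add (cone_smul (by linarith) (cone_mem (e := (j, k)) ?_))
        (cone_add (cone_smul ha (cone_mem (e := (i, k)) ?_)) (cone_mono R2 hz)) <;>
      rw [E2] <;> simp
  have KI : cone (red1 E i j k) ∩ cone (red2 E i j k) ⊆ cone (red3 E i j k) := by
    rintro x ⟨hx1, hx2⟩
    rw [E1] at hx1
    rw [E2] at hx2
    obtain ⟨b, hb, y, hy, rfl⟩ := cone_insert hx1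
    obtain ⟨a, ha, z, hz, rfl⟩ := cone_insert hy
    obtain ⟨b', hb', y', hy', hxx⟩ := cone_insert hx2
    obtain ⟨a', ha', z', hz', rfl⟩ := cone_insert hy'
    simp only at hxx ⊢
    have func : ∀ e ∈ E, ∃ φ : Vtype n →ₗ[ℝ] ℝ, φ (evE e) ≠ 0 ∧
        ∀ f ∈ E, f ≠ e → φ (evE f) = 0 := by
      intro e he
      obtain ⟨φ, hφ, hk⟩ := Submodule.exists_le_ker_of_notMem (hns e he)
      exact ⟨φ, hφ, fun f hf hfe => hk (Submodule.subset_span ⟨f, ⟨hf, hfe⟩, rfl⟩)⟩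
    have funz : ∀ φ : Vtype n →ₗ[ℝ] ℝ, (∀ f ∈ R, φ (evE f) = 0) → ∀ z ∈ cone R, φ z = 0 := by
      rintro φ hφ _ ⟨c, -, rfl⟩
      rw [map_sum]
      refine Finset.sum_eq_zero fun e he => ?_
      rw [map_smul]
      have := hφ e he
      unfold evE at this
      rw [this, smul_zero]
    have hRE : ∀ f ∈ R, f ∈ E ∧ f ≠ (i, j) ∧ f ≠ (j, k) := by
      intro f hf
      rw [hR, Finset.mem_erase, Finset.mem_erase] at hf
      exact ⟨hf.2.2, hf.2.1, hf.1⟩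
    have hxx' := hxx
    rw [← ev_add i j k] at hxx'
    obtain ⟨φ, p1, p2⟩ := func _ h1
    obtain ⟨ψ, q1, q2⟩ := func _ h2
    have pz := funz φ fun f hf => p2 f (hRE f hf).1 (hRE f hf).2.1
    have qz := funz ψ fun f hf => q2 f (hRE f hf).1 (hRE f hf).2.2
    have p3 : φ (ev j k) = 0 := p2 _ h2 hne.symm
    have q3 : ψ (ev i j) = 0 := q2 _ h1 hne
    have p4 : φ (ev i j) ≠ 0 := p1
    have q4 : ψ (ev j k) ≠ 0 := q1
    have e1 := congrArg φ hxx'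
    have e2 := congrArg ψ hxx'
    simp only [map_add, map_smul, smul_eq_mul, p3, pz z hz, pz z' hz', mul_zero, add_zero] at e1
    simp only [map_add, map_smul, smul_eq_mul, q3, qz z hz, qz z' hz', mul_zero, add_zero,
      zero_add] at e2
    have e1' : b + a = b' := mul_right_cancel₀ p4 (by linarith)
    have e2' : b = b' + a' := mul_right_cancel₀ q4 (by linarith)
    have a0 : a = 0 := by linarith
    rw [a0, zero_smul, zero_add]
    refine cone_add (cone_smul hb (cone_mem (e := (i, k)) ?_)) (cone_mono R3 hz)
    rw [E3]; simp
  refine ⟨⟨acyclic_of_LI _ L1, acyclic_of_LI _ L2, acyclic_of_LI _ L3⟩, ?_,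
    ⟨by rw [polyDim_eq E hE hLI, hd], by rw [polyDim_eq _ G1 L1, C1],
      by rw [polyDim_eq _ G2 L2, C2]⟩, ?_, by rw [polyDim_eq _ G3 L3, C3]⟩
  · rw [rootPoly_eq E hE, rootPoly_eq _ G1, rootPoly_eq _ G2, ← Set.union_inter_distrib_right,
      Set.Subset.antisymm KU (Set.union_subset K1 K2)]
  · rw [rootPoly_eq _ G3, rootPoly_eq _ G1, rootPoly_eq _ G2, ← Set.inter_inter_distrib_right,
      Set.Subset.antisymm (Set.subset_inter (cone_mono s31) (cone_mono s32)) KI]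

end RPaper
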